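/- Let G be a connected bridgeless cubic graph such that every 3-edge-cut consists of the edges incident to a common vertex. Then for any path u,v,w,x of length three in G, either G has a perfect matching containing both (u,v) and (w,x), or G minus the edges (u,v),(v,w),(w,x) is bipartite. -/

import Mathlib

/-! Multigraphs: vertex type `V`, edge type `E`, incidence map `ends : E → Sym2 V`. -/

namespace Mg

variable {V E : Type}

/-- No loops: no edge has equal endpoints. -/
def NoLoops (ends : E → Sym2 V) : Prop := ∀ e, ¬ (ends e).IsDiag

/-- Cubic: every vertex is incident with exactly three edges. -/
def IsCubic (ends : E → Sym2 V) : Prop := ∀ v, {e | v ∈ ends e}.ncard = 3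

/-- Reachability using only edges in `F`. -/
def Reach (ends : E → Sym2 V) (F : Set E) : V → V → Prop :=
  Relation.ReflTransGen (fun a b => ∃ e ∈ F, ends e = s(a, b))

/-- Connected. -/
def Connected (ends : E → Sym2 V) : Prop := ∀ v w, Reach ends Set.univ v w

/-- Bridgeless: the endpoints of each edge remain joined after its removal. -/
def Bridgeless (ends : E → Sym2 V) : Prop :=
  ∀ e v w, ends e = s(v, w) → Reach ends {f | f ≠ e} v w

/-- A 2-factor: every vertex is incident with exactly two edges of `F`. -/
def IsTwoFactor (ends : E → Sym2 V) (F : Set E) : Prop :=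
  ∀ v, {e | e ∈ F ∧ v ∈ ends e}.ncard = 2

/-- The component of `v` in the spanning subgraph with edge set `F`. -/
def component (ends : E → Sym2 V) (F : Set E) (v : V) : Set V := {w | Reach ends F v w}

/-- Every 2-factor consists only of 5-cycles: each component of any 2-factor
has exactly five vertices. -/
def TwoFactorsAllC5 (ends : E → Sym2 V) : Prop :=
  ∀ F : Set E, IsTwoFactor ends F → ∀ v, (component ends F v).ncard = 5

/-- A perfect matching: every vertex is incident with exactly one edge of `M`. -/
def IsPerfectMatching (ends : E → Sym2 V) (M : Set E) : Prop :=
  ∀ v, ∃! e, e ∈ M ∧ v ∈ ends e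

/-- A cycle of length `n`: `n` distinct vertices and `n` distinct edges, cyclically. -/
def HasCycle (ends : E → Sym2 V) (n : ℕ) : Prop :=
  ∃ (c : ZMod n → V) (f : ZMod n → E), Function.Injective c ∧ Function.Injective f ∧
    ∀ i, ends (f i) = s(c i, c (i + 1))

end Mg

/-!
Let `P` be the vertex set of the path. If `{e₁, e₃}` does not extend to a perfect matching, Tutte's
theorem for `G - P` yields, after adding `P` to the violator and using parity, a set `T ⊇ P` such
that `G - T` has at least `|T| - 2` odd components. Each of them sends at least three edges to `T`,
since `G` is cubic and bridgeless, whereas `T` spans the three edges of the path and hence emits at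
most `3 |T| - 6` edges. So equality holds throughout: `T` spans no further edge, nothing lies
outside `T` and the odd components, and each odd component has a boundary of size three, which makes
it a single vertex. Thus `T` and its complement are the two colour classes.
-/

namespace Mg

open Finset
open scoped symmDiff

section TutteFamilies

variable {W : Type*} {G : SimpleGraph W}

/-- `𝒞` consists of pairwise disjoint vertex sets of odd size, each of which is a union of
connected components of `G - T`. This records what a Tutte violator provides in a form that does
not depend on the types of connected components. -/
structure IsOddSeparatedFamily (G : SimpleGraph W) (T : Finset W) (𝒞 : Finset (Finset W)) :
    Prop where
  odd_card : ∀ C ∈ 𝒞, Odd #C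
  disjoint_separator : ∀ C ∈ 𝒞, Disjoint C T
  pairwiseDisjoint : (𝒞 : Set (Finset W)).PairwiseDisjoint id
  mem_or_mem_of_adj : ∀ C ∈ 𝒞, ∀ a ∈ C, ∀ b, G.Adj a b → b ∈ C ∨ b ∈ T

lemma IsOddSeparatedFamily.map_subtype [DecidableEq W] {P : Finset W} {S : Finset {a // a ∉ P}}
    {𝒞 : Finset (Finset {a // a ∉ P})} (h : IsOddSeparatedFamily (G.comap Subtype.val) S 𝒞) :
    IsOddSeparatedFamily G (P ∪ S.map (.subtype _))
      (𝒞.map (mapEmbedding (.subtype _)).toEmbedding) where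
  odd_card := by
    simpa using h.odd_card
  disjoint_separator := by
    simp only [forall_mem_map, RelEmbedding.coe_toEmbedding, mapEmbedding_apply,
      disjoint_union_right, disjoint_map]
    refine fun C hC => ⟨disjoint_left.2 fun a ha => ?_, h.disjoint_separator C hC⟩
    exact property_of_mem_map_subtype C ha
  pairwiseDisjoint := by
    rw [coe_map, (mapEmbedding _).toEmbedding.injective.injOn.pairwiseDisjoint_image]
    exact fun C hC D hD hCD => (disjoint_map _).2 (h.pairwiseDisjoint hC hD hCD)
  mem_or_mem_of_adj := by
    simp only [forall_mem_map, RelEmbedding.coe_toEmbedding, mapEmbedding_apply]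
    intro C hC a ha b hab
    by_cases hbP : b ∈ P
    · exact .inr (mem_union_left _ hbP)
    · exact (h.mem_or_mem_of_adj C hC a ha ⟨b, hbP⟩ hab).imp
        (mem_map_of_mem _) fun hbS => mem_union_right _ (mem_map_of_mem _ hbS)

section DeletedComponents

variable {S : Set W}

/-- The vertex set, inside the whole graph, of a connected component of `G - S`. -/
def componentVerts (c : ((⊤ : G.Subgraph).deleteVerts S).coe.ConnectedComponent) : Set W :=
  Subtype.val '' c.supp

lemma ncard_componentVerts (c : ((⊤ : G.Subgraph).deleteVerts S).coe.ConnectedComponent) :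
    (componentVerts c).ncard = c.supp.ncard :=
  Set.ncard_image_of_injective _ Subtype.val_injective

lemma disjoint_componentVerts_separator
    (c : ((⊤ : G.Subgraph).deleteVerts S).coe.ConnectedComponent) :
    Disjoint (componentVerts c) S := by
  rw [Set.disjoint_left]
  rintro _ ⟨a, -, rfl⟩
  simpa using a.2

lemma pairwise_disjoint_componentVerts :
    Pairwise (Function.onFun Disjoint (componentVerts (G := G) (S := S))) := fun _ _ hcd =>
  (Set.disjoint_image_iff Subtype.val_injective).2
    (SimpleGraph.pairwise_disjoint_supp_connectedComponent _ hcd)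

lemma componentVerts_injective : Function.Injective (componentVerts (G := G) (S := S)) :=
  Subtype.val_injective.image_injective.comp SimpleGraph.ConnectedComponent.supp_injective

lemma mem_componentVerts_or_mem_of_adj
    {c : ((⊤ : G.Subgraph).deleteVerts S).coe.ConnectedComponent} {a b : W}
    (ha : a ∈ componentVerts c) (hab : G.Adj a b) : b ∈ componentVerts c ∨ b ∈ S := by
  obtain ⟨a, hac, rfl⟩ := ha
  refine or_iff_not_imp_right.2 fun hb => ⟨⟨b, by simpa using hb⟩, ?_, rfl⟩
  have ha : a.1 ∉ S := by simpa using a.2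
  exact (c.mem_supp_congr_adj (by simp [ha, hb, hab])).1 hac

end DeletedComponents

lemma exists_isOddSeparatedFamily_oddComponents [Finite W] (G : SimpleGraph W) (S : Finset W) :
    ∃ 𝒞, IsOddSeparatedFamily G S 𝒞 ∧
      #𝒞 = ((⊤ : G.Subgraph).deleteVerts S).coe.oddComponents.ncard := by
  classical
  have := Fintype.ofFinite W
  set odd := ((⊤ : G.Subgraph).deleteVerts (S : Set W)).coe.oddComponents
  have hinj : Function.Injective fun c => (componentVerts (G := G) (S := S) c).toFinset :=
    fun c d hcd => componentVerts_injective (Set.toFinset_inj.1 hcd)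
  refine ⟨odd.toFinset.image fun c => (componentVerts c).toFinset, ⟨?_, ?_, ?_, ?_⟩, ?_⟩
  · simp only [forall_mem_image, Set.mem_toFinset, ← Set.ncard_eq_toFinset_card',
      ncard_componentVerts]
    exact fun c hc => hc
  · simp only [forall_mem_image, ← disjoint_coe, Set.coe_toFinset]
    exact fun c _ => disjoint_componentVerts_separator c
  · rw [coe_image, hinj.injOn.pairwiseDisjoint_image]
    exact fun c _ d _ hcd => Set.disjoint_toFinset.2 (pairwise_disjoint_componentVerts hcd)
  · simp only [forall_mem_image, Set.mem_toFinset]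
    exact fun c _ a ha b hab => mem_componentVerts_or_mem_of_adj ha hab
  · rw [card_image_of_injective _ hinj, ← Set.ncard_eq_toFinset_card']

lemma ncard_add_two_le_ncard_oddComponents [Finite W] (hW : Even (Nat.card W)) {S : Set W}
    (hS : G.IsTutteViolator S) :
    S.ncard + 2 ≤ ((⊤ : G.Subgraph).deleteVerts S).coe.oddComponents.ncard := by
  have hlt : S.ncard < ((⊤ : G.Subgraph).deleteVerts S).coe.oddComponents.ncard := hS
  have hverts : Nat.card ((⊤ : G.Subgraph).deleteVerts S).verts = Sᶜ.ncard := by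
    rw [Nat.card_coe_set_eq, SimpleGraph.Subgraph.deleteVerts_verts,
      SimpleGraph.Subgraph.verts_top, Set.compl_eq_univ_sdiff]
  have hcard := Set.ncard_add_ncard_compl S
  have hparity := SimpleGraph.odd_ncard_oddComponents
    (G := ((⊤ : G.Subgraph).deleteVerts S).coe)
  rw [hverts] at hparity
  grind

lemma exists_isOddSeparatedFamily_of_isMatchingFree [Finite W] (hW : Even (Nat.card W))
    (hG : G.IsMatchingFree) :
    ∃ S 𝒞, IsOddSeparatedFamily G S 𝒞 ∧ #S + 2 ≤ #𝒞 := by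
  classical
  have := Fintype.ofFinite W
  obtain ⟨S, hS⟩ := SimpleGraph.exists_isTutteViolator hG hW
  obtain ⟨𝒞, h𝒞, hcard⟩ := exists_isOddSeparatedFamily_oddComponents G S.toFinset
  refine ⟨S.toFinset, 𝒞, h𝒞, ?_⟩
  rw [hcard, ← Set.ncard_eq_toFinset_card', Set.coe_toFinset]
  exact ncard_add_two_le_ncard_oddComponents hW hS

end TutteFamilies

variable {V E : Type} {ends : E → Sym2 V}

section Matchings

/-- `M` is a perfect matching of the subgraph induced on `P`: its edges lie inside `P` and cover
every vertex of `P` exactly once. -/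
structure IsPerfectMatchingOn (ends : E → Sym2 V) (P : Set V) (M : Set E) : Prop where
  existsUnique : ∀ v ∈ P, ∃! e, e ∈ M ∧ v ∈ ends e
  mem_of_mem_ends : ∀ e ∈ M, ∀ v ∈ ends e, v ∈ P

lemma isPerfectMatchingOn_univ {M : Set E} :
    IsPerfectMatchingOn ends Set.univ M ↔ IsPerfectMatching ends M :=
  ⟨fun h v => h.existsUnique v trivial, fun h => ⟨fun v _ => h v, fun _ _ _ _ => trivial⟩⟩

lemma isPerfectMatchingOn_singleton {e : E} {a b : V} (he : ends e = s(a, b)) :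
    IsPerfectMatchingOn ends {a, b} {e} where
  existsUnique v hv := ⟨e, ⟨rfl, by simpa [he] using hv⟩, fun _ hf => hf.1⟩
  mem_of_mem_ends := by
    rintro _ rfl v hv
    simpa [he] using hv

lemma IsPerfectMatchingOn.union {P Q : Set V} {M N : Set E} (hM : IsPerfectMatchingOn ends P M)
    (hN : IsPerfectMatchingOn ends Q N) (hPQ : Disjoint P Q) :
    IsPerfectMatchingOn ends (P ∪ Q) (M ∪ N) where
  existsUnique := by
    rintro v (hv | hv)
    · obtain ⟨e, ⟨heM, hve⟩, huniq⟩ := hM.existsUnique v hv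
      refine ⟨e, ⟨.inl heM, hve⟩, ?_⟩
      rintro f ⟨hf | hf, hvf⟩
      · exact huniq f ⟨hf, hvf⟩
      · exact (Set.disjoint_left.1 hPQ hv (hN.mem_of_mem_ends f hf v hvf)).elim
    · obtain ⟨e, ⟨heN, hve⟩, huniq⟩ := hN.existsUnique v hv
      refine ⟨e, ⟨.inr heN, hve⟩, ?_⟩
      rintro f ⟨hf | hf, hvf⟩
      · exact (Set.disjoint_left.1 hPQ (hM.mem_of_mem_ends f hf v hvf) hv).elim
      · exact huniq f ⟨hf, hvf⟩
  mem_of_mem_ends e he v hv :=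
    he.imp (hM.mem_of_mem_ends e · v hv) (hN.mem_of_mem_ends e · v hv)

/-- The simple graph underlying a multigraph: loops are dropped and parallel edges merged. -/
def underlyingGraph (ends : E → Sym2 V) : SimpleGraph V :=
  SimpleGraph.fromEdgeSet (Set.range ends)

lemma exists_isPerfectMatchingOn_of_comap {p : V → Prop}
    {M : ((underlyingGraph ends).comap (Subtype.val : {a // p a} → V)).Subgraph}
    (hM : M.IsPerfectMatching) : ∃ N, IsPerfectMatchingOn ends {a | p a} N := by
  have hrange : Set.SurjOn ends Set.univ (Sym2.map Subtype.val '' M.edgeSet) := by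
    rintro _ ⟨z, hz, rfl⟩
    induction z with
    | _ a b =>
      obtain ⟨⟨e, he⟩, -⟩ := M.adj_sub hz
      exact ⟨e, trivial, he⟩
  obtain ⟨N, -, hN⟩ := hrange.exists_bijOn_subset
  refine ⟨N, fun v hv => ?_, fun e he v hv => ?_⟩
  · obtain ⟨w, hvw, huniq⟩ := SimpleGraph.Subgraph.isPerfectMatching_iff.1 hM ⟨v, hv⟩
    obtain ⟨e, heN, he⟩ := hN.surjOn ⟨s(⟨v, hv⟩, w), hvw, rfl⟩
    refine ⟨e, ⟨heN, by simp [he]⟩, fun f ⟨hfN, hvf⟩ => hN.injOn hfN heN ?_⟩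
    obtain ⟨z, hz, hzf⟩ := hN.mapsTo hfN
    rw [← hzf, Sym2.mem_map] at hvf
    obtain ⟨⟨v, _⟩, hvz, rfl⟩ := hvf
    obtain ⟨y, rfl⟩ := Sym2.mem_iff_exists.1 hvz
    rw [← hzf, he, huniq y hz]
  · obtain ⟨z, -, hz⟩ := hN.mapsTo he
    rw [← hz, Sym2.mem_map] at hv
    obtain ⟨a, -, rfl⟩ := hv
    exact a.2

end Matchings

section Boundary

variable [Fintype E]

open Classical in
/-- The edge cut `δ(A)`: the edges with one end in `A` and the other outside `A`. -/
noncomputable def boundary (ends : E → Sym2 V) (A : Finset V) : Finset E :=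
  {e | (∃ a ∈ ends e, a ∈ A) ∧ ∃ b ∈ ends e, b ∉ A}

open Classical in
/-- The edges spanned by `A`: those with both ends in `A`. -/
noncomputable def innerEdges (ends : E → Sym2 V) (A : Finset V) : Finset E :=
  {e | ∀ a ∈ ends e, a ∈ A}

lemma mem_boundary_iff {A : Finset V} {e : E} {a b : V} (he : ends e = s(a, b)) :
    e ∈ boundary ends A ↔ ¬(a ∈ A ↔ b ∈ A) := by
  simp only [boundary, mem_filter, mem_univ, true_and, he, Sym2.mem_iff, exists_eq_or_imp,
    exists_eq_left]
  tauto

lemma mem_innerEdges_iff {A : Finset V} {e : E} {a b : V} (he : ends e = s(a, b)) :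
    e ∈ innerEdges ends A ↔ a ∈ A ∧ b ∈ A := by
  simp [innerEdges, he]

lemma innerEdges_mono {A B : Finset V} (hAB : A ⊆ B) : innerEdges ends A ⊆ innerEdges ends B :=
  fun e he => by
    simp only [innerEdges, mem_filter, mem_univ, true_and] at he ⊢
    exact fun a ha => hAB (he a ha)

lemma boundary_symmDiff [DecidableEq V] [DecidableEq E] (A B : Finset V) :
    boundary ends (A ∆ B) = boundary ends A ∆ boundary ends B := by
  ext e
  induction he : ends e with
  | _ a b =>
    simp only [mem_symmDiff, mem_boundary_iff he]
    tauto

lemma boundary_univ [Fintype V] : boundary ends univ = ∅ := by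
  simp [boundary]

lemma boundary_singleton (hl : NoLoops ends) (v : V) :
    (boundary ends {v} : Set E) = {e | v ∈ ends e} := by
  ext e
  have hloop := hl e
  induction he : ends e with
  | _ a b =>
    rw [he, Sym2.mk_isDiag_iff] at hloop
    simp only [mem_coe, mem_boundary_iff he, mem_singleton, Set.mem_ofPred_eq, he, Sym2.mem_iff]
    grind

lemma mem_of_reach_of_forall_notMem_boundary {F : Set E} {A : Finset V}
    (hF : ∀ e ∈ F, e ∉ boundary ends A) {a b : V} (ha : a ∈ A) (hab : Reach ends F a b) :
    b ∈ A := by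
  induction hab with
  | refl => exact ha
  | tail _ hbc ih =>
    obtain ⟨e, heF, he⟩ := hbc
    have hcut := hF e heF
    rw [mem_boundary_iff he, not_not] at hcut
    exact hcut.1 ih

lemma card_boundary_ne_one (hb : Bridgeless ends) (A : Finset V) : #(boundary ends A) ≠ 1 := by
  intro hA
  obtain ⟨e, hAe⟩ := card_eq_one.1 hA
  have heA : e ∈ boundary ends A := by simp [hAe]
  have hF : ∀ f ∈ {f | f ≠ e}, f ∉ boundary ends A := by simp [hAe]
  induction he : ends e with
  | _ a b =>
    refine (mem_boundary_iff he).1 heA ⟨fun ha => ?_, fun hbA => ?_⟩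
    · exact mem_of_reach_of_forall_notMem_boundary hF ha (hb e a b he)
    · exact mem_of_reach_of_forall_notMem_boundary hF hbA (hb e b a (he.trans Sym2.eq_swap))

lemma eq_empty_or_eq_univ_of_boundary_eq_empty [Fintype V] (hconn : Connected ends)
    {A : Finset V} (hA : boundary ends A = ∅) : A = ∅ ∨ A = univ := by
  refine A.eq_empty_or_nonempty.imp_right fun ⟨a, ha⟩ => eq_univ_of_forall fun b => ?_
  exact mem_of_reach_of_forall_notMem_boundary (by simp [hA]) ha (hconn a b)

lemma eq_or_isCompl_of_boundary_eq [Fintype V] (hconn : Connected ends)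
    {A B : Finset V} (hAB : boundary ends A = boundary ends B) : A = B ∨ IsCompl A B := by
  classical
  have hempty : boundary ends (A ∆ B) = ∅ := by
    rw [boundary_symmDiff, hAB, symmDiff_self, bot_eq_empty]
  exact (eq_empty_or_eq_univ_of_boundary_eq_empty hconn hempty).imp
    symmDiff_eq_bot.1 (symmDiff_eq_top A B).1

end Boundary

section Counting

variable [Fintype E]

lemma card_filter_mem_ends [DecidableEq V] [DecidableEq E] (hl : NoLoops ends) (A : Finset V)
    (e : E) :
    #{v ∈ A | v ∈ ends e} =
      2 * (if e ∈ innerEdges ends A then 1 else 0) + if e ∈ boundary ends A then 1 else 0 := by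
  have hloop := hl e
  induction he : ends e with
  | _ a b =>
    rw [he, Sym2.mk_isDiag_iff] at hloop
    have hends : ({v ∈ A | v ∈ s(a, b)} : Finset V) = ({a, b} : Finset V).filter (· ∈ A) := by
      ext v
      simp [and_comm]
    simp only [hends, filter_insert, filter_singleton, mem_innerEdges_iff he,
      mem_boundary_iff he]
    by_cases ha : a ∈ A <;> by_cases hb : b ∈ A <;> simp [ha, hb, hloop]

lemma sum_card_incident_eq [DecidableEq V] [DecidableEq E] (hl : NoLoops ends) (A : Finset V)
    (F : Finset E) :
    ∑ v ∈ A, #{e ∈ F | v ∈ ends e} =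
      2 * #(F ∩ innerEdges ends A) + #(F ∩ boundary ends A) := by
  calc ∑ v ∈ A, #{e ∈ F | v ∈ ends e}
      = ∑ e ∈ F, #{v ∈ A | v ∈ ends e} :=
        sum_card_bipartiteAbove_eq_sum_card_bipartiteBelow fun v e => v ∈ ends e
    _ = 2 * #(F ∩ innerEdges ends A) + #(F ∩ boundary ends A) := by
        simp only [card_filter_mem_ends hl, sum_add_distrib, ← mul_sum, sum_boole, Nat.cast_id,
          filter_mem_eq_inter]

lemma three_mul_card_eq (hl : NoLoops ends) (hc : IsCubic ends) (A : Finset V) :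
    3 * #A = 2 * #(innerEdges ends A) + #(boundary ends A) := by
  classical
  have hdeg (v : V) : #{e | v ∈ ends e} = 3 := by
    rw [← hc v, Set.ncard_eq_toFinset_card', Set.toFinset_ofPred]
  simpa [hdeg, mul_comm] using sum_card_incident_eq hl A univ

end Counting

lemma IsCubic.even_card [Fintype V] [Finite E] (hl : NoLoops ends) (hc : IsCubic ends) :
    Even (Fintype.card V) := by
  have := Fintype.ofFinite E
  have h := three_mul_card_eq hl hc univ
  rw [boundary_univ, card_empty, card_univ] at h
  grind

lemma IsPerfectMatchingOn.even_card [Finite E] (hl : NoLoops ends) {P : Finset V} {M : Set E}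
    (hM : IsPerfectMatchingOn ends P M) : Even #P := by
  classical
  have := Fintype.ofFinite E
  have hdeg : ∀ v ∈ P, #{e ∈ M.toFinset | v ∈ ends e} = 1 := fun v hv => by
    simpa [card_eq_one_iff_existsUnique] using hM.existsUnique v hv
  have hbdry : M.toFinset ∩ boundary ends P = ∅ := by
    refine eq_empty_of_forall_notMem fun e he => ?_
    simp only [boundary, mem_inter, Set.mem_toFinset, mem_filter, mem_univ, true_and] at he
    obtain ⟨heM, -, v, hve, hvP⟩ := he
    exact hvP (hM.mem_of_mem_ends e heM v hve)
  have h := sum_card_incident_eq hl P M.toFinset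
  rw [sum_congr rfl hdeg, hbdry, sum_const, card_empty] at h
  grind

section ThreeEdgeCuts

variable [Fintype E]

lemma three_le_card_boundary_of_odd (hl : NoLoops ends) (hc : IsCubic ends)
    (hb : Bridgeless ends) {A : Finset V} (hA : Odd #A) : 3 ≤ #(boundary ends A) := by
  have hcount := three_mul_card_eq hl hc A
  have hne := card_boundary_ne_one hb A
  grind

/-- Every 3-edge-cut consists of three edges with a common end. -/
def ThreeEdgeCutsTrivial (ends : E → Sym2 V) : Prop :=
  ∀ e₁ e₂ e₃ : E, e₁ ≠ e₂ → e₁ ≠ e₃ → e₂ ≠ e₃ →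
    ¬ (∀ v w : V, Reach ends {f | f ≠ e₁ ∧ f ≠ e₂ ∧ f ≠ e₃} v w) →
    ∃ v : V, v ∈ ends e₁ ∧ v ∈ ends e₂ ∧ v ∈ ends e₃

lemma exists_boundary_eq_boundary_singleton (hl : NoLoops ends) (hc : IsCubic ends)
    (hcut : ThreeEdgeCutsTrivial ends) {A : Finset V} (hA : #(boundary ends A) = 3) :
    ∃ v, boundary ends A = boundary ends {v} := by
  classical
  obtain ⟨e₁, e₂, e₃, h₁₂, h₁₃, h₂₃, hA'⟩ := card_eq_three.1 hA
  have hsep : ¬ ∀ v w : V, Reach ends {f | f ≠ e₁ ∧ f ≠ e₂ ∧ f ≠ e₃} v w := by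
    intro hreach
    have he₁ : e₁ ∈ boundary ends A := by simp [hA']
    simp only [boundary, mem_filter] at he₁
    obtain ⟨-, ⟨a, -, ha⟩, b, -, hb⟩ := he₁
    exact hb (mem_of_reach_of_forall_notMem_boundary (by simp [hA']) ha (hreach a b))
  obtain ⟨v, hv₁, hv₂, hv₃⟩ := hcut e₁ e₂ e₃ h₁₂ h₁₃ h₂₃ hsep
  refine ⟨v, eq_of_subset_of_card_le ?_ ?_⟩
  · rw [← coe_subset, boundary_singleton hl, hA']
    rintro e he
    simp only [coe_insert, coe_singleton, Set.mem_insert_iff, Set.mem_singleton_iff] at he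
    rcases he with rfl | rfl | rfl <;> assumption
  · rw [hA, ← Set.ncard_coe_finset, boundary_singleton hl, hc v]

lemma card_eq_one_or_card_compl_eq_one [Fintype V] [DecidableEq V] (hl : NoLoops ends)
    (hc : IsCubic ends) (hconn : Connected ends) (hcut : ThreeEdgeCutsTrivial ends) {A : Finset V}
    (hA : #(boundary ends A) = 3) : #A = 1 ∨ #Aᶜ = 1 := by
  obtain ⟨v, hv⟩ := exists_boundary_eq_boundary_singleton hl hc hcut hA
  refine (eq_or_isCompl_of_boundary_eq hconn hv).imp (fun h => ?_) fun h => ?_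
  · rw [h, card_singleton]
  · rw [h.compl_eq, card_singleton]

end ThreeEdgeCuts

section OddSeparatedFamilies

variable [Fintype E] {T : Finset V} {𝒞 : Finset (Finset V)}

lemma IsOddSeparatedFamily.boundary_subset (h : IsOddSeparatedFamily (underlyingGraph ends) T 𝒞)
    {C : Finset V} (hC : C ∈ 𝒞) : boundary ends C ⊆ boundary ends T := by
  intro e he
  have mem_or_mem {a b : V} (hab : ends e = s(a, b)) (ha : a ∈ C) (hb : b ∉ C) : b ∈ T :=
    (h.mem_or_mem_of_adj C hC a ha b ⟨⟨e, hab⟩, fun hab => hb (hab ▸ ha)⟩).resolve_left hb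
  have hdisj := disjoint_left.1 (h.disjoint_separator C hC)
  induction hab : ends e with
  | _ a b =>
    have hba := hab.trans Sym2.eq_swap
    rw [mem_boundary_iff hab] at he ⊢
    grind

lemma IsOddSeparatedFamily.pairwiseDisjoint_boundary
    (h : IsOddSeparatedFamily (underlyingGraph ends) T 𝒞) :
    (𝒞 : Set (Finset V)).PairwiseDisjoint (boundary ends) := by
  refine fun C hC D hD hCD => disjoint_left.2 fun e heC heD => ?_
  have heT := h.boundary_subset hC heC
  have hCD := disjoint_left.1 (h.pairwiseDisjoint hC hD hCD)
  have hCT := disjoint_left.1 (h.disjoint_separator C hC)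
  have hDT := disjoint_left.1 (h.disjoint_separator D hD)
  induction he : ends e with
  | _ a b =>
    rw [mem_boundary_iff he] at heC heD heT
    grind

lemma IsOddSeparatedFamily.sum_card_boundary_le
    (h : IsOddSeparatedFamily (underlyingGraph ends) T 𝒞) :
    ∑ C ∈ 𝒞, #(boundary ends C) ≤ #(boundary ends T) := by
  classical
  rw [← card_biUnion h.pairwiseDisjoint_boundary]
  exact card_le_card (biUnion_subset.2 fun C => h.boundary_subset)

lemma IsOddSeparatedFamily.three_mul_card_le_sum
    (h : IsOddSeparatedFamily (underlyingGraph ends) T 𝒞)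
    (hl : NoLoops ends) (hc : IsCubic ends) (hb : Bridgeless ends) :
    3 * #𝒞 ≤ ∑ C ∈ 𝒞, #(boundary ends C) := by
  rw [mul_comm, ← smul_eq_mul]
  exact card_nsmul_le_sum _ _ _ fun C hC => three_le_card_boundary_of_odd hl hc hb (h.odd_card C hC)

lemma IsOddSeparatedFamily.card_boundary_eq_three
    (h : IsOddSeparatedFamily (underlyingGraph ends) T 𝒞)
    (hl : NoLoops ends) (hc : IsCubic ends) (hb : Bridgeless ends)
    (htight : #(boundary ends T) ≤ 3 * #𝒞) {C : Finset V} (hC : C ∈ 𝒞) :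
    #(boundary ends C) = 3 := by
  have hle : ∀ D ∈ 𝒞, 3 ≤ #(boundary ends D) :=
    fun D hD => three_le_card_boundary_of_odd hl hc hb (h.odd_card D hD)
  have hsum : ∑ _D ∈ 𝒞, 3 = ∑ D ∈ 𝒞, #(boundary ends D) := by
    have hlower := h.three_mul_card_le_sum hl hc hb
    have hupper := h.sum_card_boundary_le
    rw [sum_const, smul_eq_mul]
    omega
  exact ((sum_eq_sum_iff_of_le hle).1 hsum C hC).symm

lemma IsOddSeparatedFamily.boundary_biUnion [DecidableEq V] [DecidableEq E]
    (h : IsOddSeparatedFamily (underlyingGraph ends) T 𝒞) :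
    boundary ends (𝒞.biUnion id) = 𝒞.biUnion (boundary ends) := by
  ext e
  have hsub : ∀ C ∈ 𝒞, e ∈ boundary ends C → e ∈ boundary ends T :=
    fun C hC he => h.boundary_subset hC he
  have hdisj : ∀ C ∈ 𝒞, ∀ a ∈ C, a ∉ T :=
    fun C hC a ha => disjoint_left.1 (h.disjoint_separator C hC) ha
  induction he : ends e with
  | _ a b =>
    simp only [mem_biUnion, mem_boundary_iff he, id] at hsub ⊢
    grind

lemma IsOddSeparatedFamily.biUnion_eq_compl [Fintype V] [DecidableEq V]
    (h : IsOddSeparatedFamily (underlyingGraph ends) T 𝒞)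
    (hl : NoLoops ends) (hc : IsCubic ends) (hb : Bridgeless ends) (hconn : Connected ends)
    (htight : #(boundary ends T) ≤ 3 * #𝒞) (hT : T.Nonempty) :
    𝒞.biUnion id = Tᶜ := by
  classical
  have hboundary : boundary ends (𝒞.biUnion id) = boundary ends T := by
    rw [h.boundary_biUnion]
    refine eq_of_subset_of_card_le (biUnion_subset.2 fun C => h.boundary_subset) ?_
    rw [card_biUnion h.pairwiseDisjoint_boundary]
    exact htight.trans (h.three_mul_card_le_sum hl hc hb)
  have hdisj : Disjoint (𝒞.biUnion id) T := (disjoint_biUnion_left _ _ _).2 h.disjoint_separator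
  rcases eq_or_isCompl_of_boundary_eq hconn hboundary with heq | hcompl
  · rw [heq, disjoint_self_iff_empty] at hdisj
    exact (hT.ne_empty hdisj).elim
  · exact hcompl.eq_compl

lemma IsOddSeparatedFamily.mem_innerEdges_or_mem_boundary [Finite V]
    (h : IsOddSeparatedFamily (underlyingGraph ends) T 𝒞)
    (hl : NoLoops ends) (hc : IsCubic ends) (hb : Bridgeless ends) (hconn : Connected ends)
    (hcut : ThreeEdgeCutsTrivial ends) (htight : #(boundary ends T) ≤ 3 * #𝒞) (hT : 2 ≤ #T)
    (e : E) : e ∈ innerEdges ends T ∨ e ∈ boundary ends T := by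
  classical
  have := Fintype.ofFinite V
  have hcover := h.biUnion_eq_compl hl hc hb hconn htight (card_pos.1 (by omega))
  have hsingleton : ∀ C ∈ 𝒞, #C = 1 := fun C hC => by
    have hTC : #T ≤ #Cᶜ := card_le_card (subset_compl_comm.1
      (subset_compl_iff_disjoint_right.2 (h.disjoint_separator C hC)))
    have := card_eq_one_or_card_compl_eq_one hl hc hconn hcut
      (h.card_boundary_eq_three hl hc hb htight hC)
    omega
  have hloop := hl e
  by_contra! ⟨hinner, hboundary⟩
  induction he : ends e with
  | _ a b =>
    rw [he, Sym2.mk_isDiag_iff] at hloop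
    have ha : a ∈ 𝒞.biUnion id := by
      rw [mem_innerEdges_iff he] at hinner
      rw [mem_boundary_iff he] at hboundary
      rw [hcover, mem_compl]
      tauto
    obtain ⟨C, hC, haC⟩ := mem_biUnion.1 ha
    have hbC : b ∈ C := by
      have heC : e ∉ boundary ends C := fun heC => hboundary (h.boundary_subset hC heC)
      rw [mem_boundary_iff he, not_not] at heC
      exact heC.1 haC
    exact hloop (card_le_one.1 (hsingleton C hC).le a haC b hbC)

end OddSeparatedFamilies

section Extension

variable [Finite V] {P : Finset V} {M₀ : Set E}

lemma exists_isOddSeparatedFamily_of_not_extendable [Finite E] (hl : NoLoops ends)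
    (hc : IsCubic ends) (hM₀ : IsPerfectMatchingOn ends P M₀)
    (hext : ¬∃ M, IsPerfectMatching ends M ∧ M₀ ⊆ M) :
    ∃ T 𝒞, P ⊆ T ∧ IsOddSeparatedFamily (underlyingGraph ends) T 𝒞 ∧ #T + 2 ≤ #𝒞 + #P := by
  classical
  have := Fintype.ofFinite V
  have hfree : ((underlyingGraph ends).comap
      (Subtype.val : {a // a ∉ P} → V)).IsMatchingFree := by
    intro M hM
    obtain ⟨N, hN⟩ := exists_isPerfectMatchingOn_of_comap hM
    have hunion := hM₀.union hN disjoint_compl_right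
    rw [show (P : Set V) ∪ {a | a ∉ P} = Set.univ from Set.union_compl_self _,
      isPerfectMatchingOn_univ] at hunion
    exact hext ⟨M₀ ∪ N, hunion, Set.subset_union_left⟩
  have heven : Even (Nat.card {a // a ∉ P}) := by
    have hV := hc.even_card hl
    have hP := hM₀.even_card hl
    have hcard := card_compl_add_card P
    rw [Nat.card_eq_fintype_card, Fintype.card_subtype]
    rw [compl_eq_univ_sdiff, sdiff_eq_filter] at hcard
    grind
  obtain ⟨S, 𝒞, h𝒞, hcard⟩ := exists_isOddSeparatedFamily_of_isMatchingFree heven hfree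
  refine ⟨_, _, subset_union_left, h𝒞.map_subtype, ?_⟩
  have hT := card_union_le P (S.map (.subtype _))
  rw [card_map] at hT ⊢
  omega

/-- The bound `3 |P| ≤ 2 |F| + 6` is exactly what forces equality when counting the edges between a
Tutte violator and its odd components; a path with four vertices and three edges attains it. -/
theorem exists_isPerfectMatching_or_forall_mem_boundary [Fintype E] (hl : NoLoops ends)
    (hc : IsCubic ends) (hb : Bridgeless ends) (hconn : Connected ends)
    (hcut : ThreeEdgeCutsTrivial ends) (hM₀ : IsPerfectMatchingOn ends P M₀) {F : Finset E}
    (hF : F ⊆ innerEdges ends P) (hPF : 3 * #P ≤ 2 * #F + 6) :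
    (∃ M, IsPerfectMatching ends M ∧ M₀ ⊆ M) ∨ ∃ T, ∀ e ∉ F, e ∈ boundary ends T := by
  refine or_iff_not_imp_left.2 fun hext => ?_
  obtain ⟨T, 𝒞, hPT, h𝒞, hdeficit⟩ := exists_isOddSeparatedFamily_of_not_extendable hl hc hM₀ hext
  have hFT : F ⊆ innerEdges ends T := hF.trans (innerEdges_mono hPT)
  have hcardF := card_le_card hFT
  have hcardP := card_le_card hPT
  have hcount := three_mul_card_eq hl hc T
  have hboundary := (h𝒞.three_mul_card_le_sum hl hc hb).trans h𝒞.sum_card_boundary_le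
  have hinner : F = innerEdges ends T := eq_of_subset_of_card_le hFT (by omega)
  refine ⟨T, fun e he => ?_⟩
  have := h𝒞.mem_innerEdges_or_mem_boundary hl hc hb hconn hcut (by omega) (by omega) e
  exact this.resolve_left (hinner ▸ he)

end Extension

end Mg

theorem stmt18 {V E : Type} [Fintype V] [Fintype E] (ends : E → Sym2 V)
    (hl : Mg.NoLoops ends) (hc : Mg.IsCubic ends) (hb : Mg.Bridgeless ends)
    (hconn : Mg.Connected ends)
    (hcut : ∀ e₁ e₂ e₃ : E, e₁ ≠ e₂ → e₁ ≠ e₃ → e₂ ≠ e₃ →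
      ¬ (∀ v w : V, Mg.Reach ends {f | f ≠ e₁ ∧ f ≠ e₂ ∧ f ≠ e₃} v w) →
      ∃ v : V, v ∈ ends e₁ ∧ v ∈ ends e₂ ∧ v ∈ ends e₃) :
    ∀ (u v w x : V) (e₁ e₂ e₃ : E),
      ends e₁ = s(u, v) → ends e₂ = s(v, w) → ends e₃ = s(w, x) →
      u ≠ w → v ≠ x → u ≠ x →
      (∃ M : Set E, Mg.IsPerfectMatching ends M ∧ e₁ ∈ M ∧ e₃ ∈ M) ∨
      (∃ b : V → Bool, ∀ (e : E) (a c : V), ends e = s(a, c) →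
        ends e ≠ s(u, v) → ends e ≠ s(v, w) → ends e ≠ s(w, x) → b a ≠ b c) := by
  classical
  intro u v w x e₁ e₂ e₃ he₁ he₂ he₃ huw hvx hux
  have huv : u ≠ v := by simpa [he₁] using hl e₁
  have hvw : v ≠ w := by simpa [he₂] using hl e₂
  have hwx : w ≠ x := by simpa [he₃] using hl e₃
  have hM₀ : Mg.IsPerfectMatchingOn ends ({u, v, w, x} : Finset V) ({e₁} ∪ {e₃}) := by
    rw [show (({u, v, w, x} : Finset V) : Set V) = {u, v} ∪ {w, x} by grind]
    exact (Mg.isPerfectMatchingOn_singleton he₁).union (Mg.isPerfectMatchingOn_singleton he₃)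
      (by simp [huw.symm, hux.symm, hvw.symm, hvx.symm])
  have hF : {e₁, e₂, e₃} ⊆ Mg.innerEdges ends {u, v, w, x} := by
    simp [Finset.insert_subset_iff, Mg.mem_innerEdges_iff he₁, Mg.mem_innerEdges_iff he₂,
      Mg.mem_innerEdges_iff he₃]
  have hcardP : ({u, v, w, x} : Finset V).card = 4 := by
    grind
  have hcardF : ({e₁, e₂, e₃} : Finset E).card = 3 := by
    grind
  rcases Mg.exists_isPerfectMatching_or_forall_mem_boundary hl hc hb hconn hcut hM₀ hF
    (by omega) with ⟨M, hM, hM₀M⟩ | ⟨T, hT⟩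
  · exact .inl ⟨M, hM, hM₀M (.inl rfl), hM₀M (.inr rfl)⟩
  · refine .inr ⟨fun a => decide (a ∈ T), fun e a c he hne₁ hne₂ hne₃ => ?_⟩
    have heT := hT e (by grind)
    simpa [Mg.mem_boundary_iff he] using heT
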